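/- Let M, C_1,…,C_n, S_1,…,S_n, Y_1,…,Y_n be jointly distributed random variables with finite ranges such that for each i ∈ {1,…,n}, the pair (C_i, S_i) is independent of (C_{i+1}^n, S_{i+1}^n). Then I(C^n, S^n ; Y^n, M) ≥ Σ_{i=1}^n I(C_i, S_i ; M, Y^i, S_{i+1}^n), where C^n = (C_1,…,C_n), S^n = (S_1,…,S_n), Y^n = (Y_1,…,Y_n), Y^i = (Y_1,…,Y_i), S_{i+1}^n = (S_{i+1},…,S_n), and S_{n+1}^n is interpreted as a constant. -/

import Mathlib

open Finset

/-- The Shannon entropy `H(q) = −Σ_{a : q(a)>0} q(a) log₂ q(a)` of a pmf on a finite set. -/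
noncomputable def shannonEnt {α : Type} [Fintype α] (q : α → ℝ) : ℝ :=
  -∑ a, if 0 < q a then q a * Real.logb 2 (q a) else 0

/-- The distribution (pushforward pmf) of a random variable `X` on a finite probability
space with pmf `μ`. -/
def rvDist {Ω α : Type} [Fintype Ω] [DecidableEq α] (μ : Ω → ℝ) (X : Ω → α) : α → ℝ :=
  fun a => ∑ ω, if X ω = a then μ ω else 0

/-- The Shannon entropy `H(X)` of a finite-valued random variable `X`. -/
noncomputable def Hrv {Ω α : Type} [Fintype Ω] [Fintype α] [DecidableEq α]
    (μ : Ω → ℝ) (X : Ω → α) : ℝ :=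
  shannonEnt (rvDist μ X)

/-- The mutual information `I(X;Y) = H(X) + H(Y) − H(X,Y)`. -/
noncomputable def MIrv {Ω α β : Type} [Fintype Ω] [Fintype α] [Fintype β]
    [DecidableEq α] [DecidableEq β] (μ : Ω → ℝ) (X : Ω → α) (Y : Ω → β) : ℝ :=
  Hrv μ X + Hrv μ Y - Hrv μ (fun ω => (X ω, Y ω))

/-- `X` and `Y` are independent: their joint distribution factorizes. -/
def IndepRV {Ω α β : Type} [Fintype Ω] [DecidableEq α] [DecidableEq β]
    (μ : Ω → ℝ) (X : Ω → α) (Y : Ω → β) : Prop :=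
  ∀ a b, rvDist μ (fun ω => (X ω, Y ω)) (a, b) = rvDist μ X a * rvDist μ Y b

/-! By the chain rule, `I(C^n, S^n; Y^n, M)` is the sum over `i` of
`I(C_i, S_i; Y^n, M | C_{i+1}^n, S_{i+1}^n)`. Since `(C_i, S_i)` is independent of the conditioning
variable, the `i`-th term equals `I(C_i, S_i; Y^n, M, C_{i+1}^n, S_{i+1}^n)`, and by data processing
this can only decrease when the second argument is replaced by `(M, Y^i, S_{i+1}^n)`. -/

/-- The conditional mutual information `I(X;Y|Z) = H(X|Z) + H(Y|Z) − H(X,Y|Z)`, written out in terms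
of joint entropies, the two copies of `H(Z)` that cancel being omitted. -/
noncomputable def CMIrv {Ω α β γ : Type} [Fintype Ω] [Fintype α] [Fintype β] [Fintype γ]
    [DecidableEq α] [DecidableEq β] [DecidableEq γ]
    (μ : Ω → ℝ) (X : Ω → α) (Y : Ω → β) (Z : Ω → γ) : ℝ :=
  Hrv μ (fun ω => (X ω, Z ω)) + Hrv μ (fun ω => (Y ω, Z ω))
    - Hrv μ (fun ω => (X ω, Y ω, Z ω)) - Hrv μ Z

section Distribution

variable {Ω α β : Type} [Fintype Ω] [DecidableEq α] [DecidableEq β] {μ : Ω → ℝ}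

lemma sum_rvDist_mul [Fintype α] (μ : Ω → ℝ) (X : Ω → α) (g : α → ℝ) :
    ∑ a, rvDist μ X a * g a = ∑ ω, μ ω * g (X ω) := by
  simp only [rvDist, sum_mul, ite_mul, zero_mul]
  rw [sum_comm]
  simp

lemma sum_rvDist [Fintype α] (μ : Ω → ℝ) (X : Ω → α) : ∑ a, rvDist μ X a = ∑ ω, μ ω := by
  simpa using sum_rvDist_mul μ X 1

lemma sum_rvDist_prod_left [Fintype α] (μ : Ω → ℝ) (X : Ω → α) (Y : Ω → β) (b : β) :
    ∑ a, rvDist μ (fun ω => (X ω, Y ω)) (a, b) = rvDist μ Y b := by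
  simp only [rvDist, Prod.mk.injEq, ite_and]
  rw [sum_comm]
  simp

lemma rvDist_nonneg (hμ0 : ∀ ω, 0 ≤ μ ω) (X : Ω → α) (a : α) : 0 ≤ rvDist μ X a :=
  sum_nonneg fun ω _ => by split_ifs <;> simp [hμ0]

lemma le_rvDist_apply (hμ0 : ∀ ω, 0 ≤ μ ω) (X : Ω → α) (ω : Ω) : μ ω ≤ rvDist μ X (X ω) := by
  simpa [rvDist] using single_le_sum (f := fun ω' => if X ω' = X ω then μ ω' else 0)
    (fun ω' _ => by split_ifs <;> simp [hμ0]) (mem_univ ω)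

end Distribution

section Entropy

variable {Ω α β : Type} [Fintype Ω] [Fintype α] [Fintype β] [DecidableEq α] [DecidableEq β]
  {μ : Ω → ℝ} {X : Ω → α} {Y : Ω → β}

lemma Hrv_eq_neg_sum (hμ0 : ∀ ω, 0 ≤ μ ω) (X : Ω → α) :
    Hrv μ X = -∑ ω, μ ω * Real.logb 2 (rvDist μ X (X ω)) := by
  rw [← sum_rvDist_mul μ X fun a => Real.logb 2 (rvDist μ X a), Hrv, shannonEnt]
  congr! 2 with a
  split_ifs with h
  · rfl
  · simp [le_antisymm (not_lt.1 h) (rvDist_nonneg hμ0 X a)]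

lemma Hrv_congr (hμ0 : ∀ ω, 0 ≤ μ ω) (h : ∀ ω ω', X ω = X ω' ↔ Y ω = Y ω') :
    Hrv μ X = Hrv μ Y := by
  simp only [Hrv_eq_neg_sum hμ0, rvDist, h]

lemma Hrv_of_subsingleton [Subsingleton α] (hμ0 : ∀ ω, 0 ≤ μ ω) (hμ1 : ∑ ω, μ ω = 1) (X : Ω → α) :
    Hrv μ X = 0 := by
  have hdist (ω : Ω) : rvDist μ X (X ω) = 1 := by simp [rvDist, Subsingleton.elim _ (X ω), hμ1]
  simp [Hrv_eq_neg_sum hμ0, hdist]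

lemma IndepRV.Hrv_prod (hμ0 : ∀ ω, 0 ≤ μ ω) (h : IndepRV μ X Y) :
    Hrv μ (fun ω => (X ω, Y ω)) = Hrv μ X + Hrv μ Y := by
  simp only [Hrv_eq_neg_sum hμ0]
  rw [← neg_add, ← sum_add_distrib]
  congr! 2 with ω
  rcases (hμ0 ω).eq_or_lt with hω | hω
  · simp [← hω]
  · have hX := hω.trans_le (le_rvDist_apply hμ0 X ω)
    have hY := hω.trans_le (le_rvDist_apply hμ0 Y ω)
    rw [h, Real.logb_mul hX.ne' hY.ne', mul_add]

lemma IndepRV.MIrv_eq_zero (hμ0 : ∀ ω, 0 ≤ μ ω) (h : IndepRV μ X Y) : MIrv μ X Y = 0 := by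
  rw [MIrv, h.Hrv_prod hμ0, sub_self]

end Entropy

section Congruence

variable {Ω α α' β γ γ' : Type} [Fintype Ω] [Fintype α] [Fintype α'] [Fintype β] [Fintype γ]
  [Fintype γ'] [DecidableEq α] [DecidableEq α'] [DecidableEq β] [DecidableEq γ] [DecidableEq γ']
  {μ : Ω → ℝ} {X : Ω → α} {X' : Ω → α'} {Z : Ω → γ} {Z' : Ω → γ'}

lemma MIrv_congr_left (hμ0 : ∀ ω, 0 ≤ μ ω) (h : ∀ ω ω', X ω = X ω' ↔ X' ω = X' ω') (Y : Ω → β) :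
    MIrv μ X Y = MIrv μ X' Y := by
  have hXY : Hrv μ (fun ω => (X ω, Y ω)) = Hrv μ (fun ω => (X' ω, Y ω)) :=
    Hrv_congr hμ0 (by simp [h])
  rw [MIrv, MIrv, Hrv_congr hμ0 h, hXY]

lemma MIrv_congr_right (hμ0 : ∀ ω, 0 ≤ μ ω) (X : Ω → β) (h : ∀ ω ω', Z ω = Z ω' ↔ Z' ω = Z' ω') :
    MIrv μ X Z = MIrv μ X Z' := by
  have hXZ : Hrv μ (fun ω => (X ω, Z ω)) = Hrv μ (fun ω => (X ω, Z' ω)) :=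
    Hrv_congr hμ0 (by simp [h])
  rw [MIrv, MIrv, Hrv_congr hμ0 h, hXZ]

lemma CMIrv_congr_right (hμ0 : ∀ ω, 0 ≤ μ ω) (X : Ω → α) (Y : Ω → β)
    (h : ∀ ω ω', Z ω = Z ω' ↔ Z' ω = Z' ω') : CMIrv μ X Y Z = CMIrv μ X Y Z' := by
  have hXZ : Hrv μ (fun ω => (X ω, Z ω)) = Hrv μ (fun ω => (X ω, Z' ω)) :=
    Hrv_congr hμ0 (by simp [h])
  have hYZ : Hrv μ (fun ω => (Y ω, Z ω)) = Hrv μ (fun ω => (Y ω, Z' ω)) :=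
    Hrv_congr hμ0 (by simp [h])
  have hXYZ : Hrv μ (fun ω => (X ω, Y ω, Z ω)) = Hrv μ (fun ω => (X ω, Y ω, Z' ω)) :=
    Hrv_congr hμ0 (by simp [h])
  rw [CMIrv, CMIrv, hXZ, hYZ, hXYZ, Hrv_congr hμ0 h]

end Congruence

section Gibbs

variable {Ω α β γ : Type} [Fintype Ω] [DecidableEq α] [DecidableEq β] [DecidableEq γ] {μ : Ω → ℝ}

lemma sum_mul_logb_nonpos {b : ℝ} (hb : 1 < b) {r : Ω → ℝ} (hμ0 : ∀ ω, 0 ≤ μ ω)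
    (hr : ∀ ω, 0 < μ ω → 0 < r ω) (hsum : ∑ ω, μ ω * r ω ≤ ∑ ω, μ ω) :
    ∑ ω, μ ω * Real.logb b (r ω) ≤ 0 := by
  have hlog (ω : Ω) : μ ω * Real.log (r ω) ≤ μ ω * r ω - μ ω := by
    rcases (hμ0 ω).eq_or_lt with hω | hω
    · simp [← hω]
    · nlinarith [Real.log_le_sub_one_of_pos (hr ω hω)]
  simp only [Real.logb, mul_div_assoc', ← sum_div]
  refine div_nonpos_of_nonpos_of_nonneg ?_ (Real.log_pos hb).le
  calc ∑ ω, μ ω * Real.log (r ω)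
      ≤ ∑ ω, (μ ω * r ω - μ ω) := sum_le_sum fun ω _ => hlog ω
    _ ≤ 0 := by rw [sum_sub_distrib]; exact sub_nonpos.2 hsum

/-- The ratio of the density of `(X, Y, Z)` were `X` and `Y` conditionally independent given `Z`,
namely `p(x,z) p(y,z) / p(z)`, to its actual density `p(x,y,z)`. Division makes it `0`
where `p(x,y,z)` vanishes. Its mean is at most `1`, which is what makes `I(X;Y|Z)` nonnegative. -/
noncomputable def condIndepRatio (μ : Ω → ℝ) (X : Ω → α) (Y : Ω → β) (Z : Ω → γ)
    (p : α × β × γ) : ℝ :=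
  rvDist μ (fun ω => (X ω, Z ω)) (p.1, p.2.2) * rvDist μ (fun ω => (Y ω, Z ω)) p.2
    / (rvDist μ (fun ω => (X ω, Y ω, Z ω)) p * rvDist μ Z p.2.2)

lemma sum_mul_condIndepRatio_le [Finite α] [Finite β] [Finite γ] (hμ0 : ∀ ω, 0 ≤ μ ω)
    (X : Ω → α) (Y : Ω → β) (Z : Ω → γ) :
    ∑ ω, μ ω * condIndepRatio μ X Y Z (X ω, Y ω, Z ω) ≤ ∑ ω, μ ω := by
  have := Fintype.ofFinite α
  have := Fintype.ofFinite β
  have := Fintype.ofFinite γ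
  set XZ : Ω → α × γ := fun ω => (X ω, Z ω) with hXZ
  set YZ : Ω → β × γ := fun ω => (Y ω, Z ω) with hYZ
  set XYZ : Ω → α × β × γ := fun ω => (X ω, Y ω, Z ω)
  have hcancel (x : α) (y : β) (z : γ) :
      rvDist μ XYZ (x, y, z) * condIndepRatio μ X Y Z (x, y, z)
        ≤ rvDist μ XZ (x, z) * rvDist μ YZ (y, z) / rvDist μ Z z := by
    rw [condIndepRatio, mul_div_assoc', mul_div_mul_comm]
    exact mul_le_of_le_one_left
      (div_nonneg (mul_nonneg (rvDist_nonneg hμ0 _ _) (rvDist_nonneg hμ0 _ _))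
        (rvDist_nonneg hμ0 _ _)) (div_self_le_one _)
  calc ∑ ω, μ ω * condIndepRatio μ X Y Z (XYZ ω)
      = ∑ z, ∑ y, ∑ x, rvDist μ XYZ (x, y, z) * condIndepRatio μ X Y Z (x, y, z) := by
        rw [← sum_rvDist_mul, Fintype.sum_prod_type_right, Fintype.sum_prod_type_right]
    _ ≤ ∑ z, ∑ y, ∑ x, rvDist μ XZ (x, z) * rvDist μ YZ (y, z) / rvDist μ Z z :=
        sum_le_sum fun z _ => sum_le_sum fun y _ => sum_le_sum fun x _ => hcancel x y z
    _ = ∑ z, rvDist μ Z z * rvDist μ Z z / rvDist μ Z z := by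
        simp only [← sum_div, ← sum_mul, ← mul_sum, hXZ, hYZ, sum_rvDist_prod_left]
    _ = ∑ ω, μ ω := by simp only [mul_self_div_self, sum_rvDist]

end Gibbs

section MutualInformation

variable {Ω α β γ : Type} [Fintype Ω] [Fintype α] [Fintype β] [Fintype γ]
  [DecidableEq α] [DecidableEq β] [DecidableEq γ] {μ : Ω → ℝ}

lemma MIrv_of_subsingleton_left [Subsingleton α] (hμ0 : ∀ ω, 0 ≤ μ ω) (hμ1 : ∑ ω, μ ω = 1)
    (X : Ω → α) (Y : Ω → β) : MIrv μ X Y = 0 := by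
  have hXY : Hrv μ (fun ω => (X ω, Y ω)) = Hrv μ Y :=
    Hrv_congr hμ0 fun ω ω' => by simp [Subsingleton.elim (X ω) (X ω')]
  rw [MIrv, Hrv_of_subsingleton hμ0 hμ1, hXY, zero_add, sub_self]

lemma MIrv_prod_right (μ : Ω → ℝ) (X : Ω → α) (Y : Ω → β) (Z : Ω → γ) :
    MIrv μ X (fun ω => (Y ω, Z ω)) = MIrv μ X Z + CMIrv μ X Y Z := by
  simp only [MIrv, CMIrv]
  ring

lemma MIrv_prod_left (hμ0 : ∀ ω, 0 ≤ μ ω) (X : Ω → α) (Y : Ω → β) (Z : Ω → γ) :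
    MIrv μ (fun ω => (X ω, Y ω)) Z = MIrv μ Y Z + CMIrv μ X Z Y := by
  have hYZ : Hrv μ (fun ω => (Y ω, Z ω)) = Hrv μ (fun ω => (Z ω, Y ω)) :=
    Hrv_congr hμ0 fun ω ω' => by simp [and_comm]
  have hXYZ : Hrv μ (fun ω => ((X ω, Y ω), Z ω)) = Hrv μ (fun ω => (X ω, Z ω, Y ω)) :=
    Hrv_congr hμ0 fun ω ω' => by simp [and_assoc, and_comm]
  rw [MIrv, MIrv, CMIrv, hYZ, hXYZ]
  ring

lemma CMIrv_nonneg (hμ0 : ∀ ω, 0 ≤ μ ω) (X : Ω → α) (Y : Ω → β) (Z : Ω → γ) :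
    0 ≤ CMIrv μ X Y Z := by
  have hpos {δ : Type} [DecidableEq δ] (V : Ω → δ) {ω : Ω} (hω : 0 < μ ω) : 0 < rvDist μ V (V ω) :=
    hω.trans_le (le_rvDist_apply hμ0 V ω)
  set XZ : Ω → α × γ := fun ω => (X ω, Z ω)
  set YZ : Ω → β × γ := fun ω => (Y ω, Z ω)
  set XYZ : Ω → α × β × γ := fun ω => (X ω, Y ω, Z ω)
  have hratio (ω : Ω) (hω : 0 < μ ω) : 0 < condIndepRatio μ X Y Z (XYZ ω) :=
    div_pos (mul_pos (hpos XZ hω) (hpos YZ hω)) (mul_pos (hpos XYZ hω) (hpos Z hω))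
  have hgibbs : ∑ ω, μ ω * Real.logb 2 (condIndepRatio μ X Y Z (XYZ ω)) ≤ 0 :=
    sum_mul_logb_nonpos one_lt_two hμ0 hratio (sum_mul_condIndepRatio_le hμ0 X Y Z)
  have hexpand (ω : Ω) : μ ω * Real.logb 2 (condIndepRatio μ X Y Z (XYZ ω)) =
      μ ω * Real.logb 2 (rvDist μ XZ (XZ ω)) + μ ω * Real.logb 2 (rvDist μ YZ (YZ ω))
        - μ ω * Real.logb 2 (rvDist μ XYZ (XYZ ω)) - μ ω * Real.logb 2 (rvDist μ Z (Z ω)) := by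
    rcases (hμ0 ω).eq_or_lt with hω | hω
    · simp [← hω]
    · rw [condIndepRatio, Real.logb_div (mul_pos (hpos XZ hω) (hpos YZ hω)).ne'
        (mul_pos (hpos XYZ hω) (hpos Z hω)).ne', Real.logb_mul (hpos XZ hω).ne' (hpos YZ hω).ne',
        Real.logb_mul (hpos XYZ hω).ne' (hpos Z hω).ne']
      ring
  simp only [hexpand, sum_add_distrib, sum_sub_distrib] at hgibbs
  simp only [CMIrv, Hrv_eq_neg_sum hμ0]
  linarith

lemma MIrv_comp_right_le (hμ0 : ∀ ω, 0 ≤ μ ω) (X : Ω → α) (Y : Ω → β) (f : β → γ) :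
    MIrv μ X (fun ω => f (Y ω)) ≤ MIrv μ X Y :=
  calc MIrv μ X (fun ω => f (Y ω))
      ≤ MIrv μ X (fun ω => f (Y ω)) + CMIrv μ X Y (fun ω => f (Y ω)) :=
        le_add_of_nonneg_right (CMIrv_nonneg hμ0 X Y _)
    _ = MIrv μ X (fun ω => (Y ω, f (Y ω))) := (MIrv_prod_right μ X Y _).symm
    _ = MIrv μ X Y := MIrv_congr_right hμ0 X fun ω ω' => by
        simpa using fun h : Y ω = Y ω' => congrArg f h

lemma IndepRV.MIrv_comp_le_CMIrv {δ : Type} [Fintype δ] [DecidableEq δ] {X : Ω → α} {Z : Ω → γ}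
    (hμ0 : ∀ ω, 0 ≤ μ ω) (h : IndepRV μ X Z) (Y : Ω → β) (f : β × γ → δ) :
    MIrv μ X (fun ω => f (Y ω, Z ω)) ≤ CMIrv μ X Y Z :=
  calc MIrv μ X (fun ω => f (Y ω, Z ω))
      ≤ MIrv μ X (fun ω => (Y ω, Z ω)) := MIrv_comp_right_le hμ0 X _ f
    _ = MIrv μ X Z + CMIrv μ X Y Z := MIrv_prod_right μ X Y Z
    _ = CMIrv μ X Y Z := by rw [h.MIrv_eq_zero hμ0, zero_add]

end MutualInformation

section ChainRule

variable {Ω ι ζ : Type} {β : ι → Type} [Fintype Ω] [LinearOrder ι] [Fintype ζ] [DecidableEq ζ]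
  [∀ i, Fintype (β i)] [∀ i, DecidableEq (β i)] {μ : Ω → ℝ}

lemma MIrv_finset_eq_sum_CMIrv (hμ0 : ∀ ω, 0 ≤ μ ω) (hμ1 : ∑ ω, μ ω = 1)
    (X : ∀ i, Ω → β i) (Z : Ω → ζ) (s : Finset ι) :
    MIrv μ (fun ω (j : s) => X j ω) Z =
      ∑ i ∈ s, CMIrv μ (X i) Z (fun ω (j : {j ∈ s | i < j}) => X j ω) := by
  induction s using Finset.induction_on_min with
  | empty => rw [MIrv_of_subsingleton_left hμ0 hμ1, sum_empty]
  | insert a s ha ih =>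
    have hsplit : MIrv μ (fun ω (j : ↥(insert a s)) => X j ω) Z =
        MIrv μ (fun ω => (X a ω, fun j : s => X j ω)) Z :=
      MIrv_congr_left hμ0 (fun ω ω' => by simp [funext_iff]) Z
    have htail_min : CMIrv μ (X a) Z (fun ω (j : {j ∈ insert a s | a < j}) => X j ω) =
        CMIrv μ (X a) Z (fun ω (j : s) => X j ω) :=
      CMIrv_congr_right hμ0 _ _ fun ω ω' => by simp +contextual [funext_iff, ha]
    have htail (i : ι) (hi : i ∈ s) :
        CMIrv μ (X i) Z (fun ω (j : {j ∈ insert a s | i < j}) => X j ω) =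
          CMIrv μ (X i) Z (fun ω (j : {j ∈ s | i < j}) => X j ω) :=
      CMIrv_congr_right hμ0 _ _ fun ω ω' => by simp [funext_iff, (ha i hi).not_gt]
    rw [hsplit, MIrv_prod_left hμ0, ih, sum_insert fun h => (ha a h).false, htail_min,
      sum_congr rfl htail, add_comm]

lemma MIrv_pi_eq_sum_CMIrv [Fintype ι] (hμ0 : ∀ ω, 0 ≤ μ ω) (hμ1 : ∑ ω, μ ω = 1)
    (X : ∀ i, Ω → β i) (Z : Ω → ζ) :
    MIrv μ (fun ω i => X i ω) Z =
      ∑ i, CMIrv μ (X i) Z (fun ω (j : {j // i < j}) => X j ω) :=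
  calc MIrv μ (fun ω i => X i ω) Z
      = MIrv μ (fun ω (j : (univ : Finset ι)) => X j ω) Z :=
        MIrv_congr_left hμ0 (fun ω ω' => by simp [funext_iff]) Z
    _ = ∑ i, CMIrv μ (X i) Z (fun ω (j : {j ∈ (univ : Finset ι) | i < j}) => X j ω) :=
        MIrv_finset_eq_sum_CMIrv hμ0 hμ1 X Z univ
    _ = ∑ i, CMIrv μ (X i) Z (fun ω (j : {j // i < j}) => X j ω) :=
        sum_congr rfl fun i _ => CMIrv_congr_right hμ0 _ _ fun ω ω' => by simp [funext_iff]

end ChainRule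

theorem leakage_single_letterization_general
    {Ω ι α : Type} {β γ η : ι → Type} [Fintype Ω] [Fintype ι] [LinearOrder ι] [Fintype α]
    [∀ i, Fintype (β i)] [∀ i, Fintype (γ i)] [∀ i, Fintype (η i)] [DecidableEq α]
    [∀ i, DecidableEq (β i)] [∀ i, DecidableEq (γ i)] [∀ i, DecidableEq (η i)]
    {μ : Ω → ℝ} (hμ0 : ∀ ω, 0 ≤ μ ω) (hμ1 : ∑ ω, μ ω = 1)
    (M : Ω → α) (C : ∀ i, Ω → β i) (S : ∀ i, Ω → γ i) (Y : ∀ i, Ω → η i)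
    (hindep : ∀ i, IndepRV μ (fun ω => (C i ω, S i ω))
      (fun ω => ((fun j : {j // i < j} => C j ω), (fun j : {j // i < j} => S j ω)))) :
    ∑ i, MIrv μ (fun ω => (C i ω, S i ω))
        (fun ω => (M ω, (fun j : {j // j ≤ i} => Y j ω), (fun j : {j // i < j} => S j ω)))
      ≤ MIrv μ (fun ω => ((fun i => C i ω), (fun i => S i ω)))
          (fun ω => ((fun i => Y i ω), M ω)) := by
  set CS : ∀ i, Ω → β i × γ i := fun i ω => (C i ω, S i ω) with hCS
  set YM : Ω → (∀ i, η i) × α := fun ω => ((fun i => Y i ω), M ω)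
  calc ∑ i, MIrv μ (CS i)
        (fun ω => (M ω, (fun j : {j // j ≤ i} => Y j ω), (fun j : {j // i < j} => S j ω)))
      ≤ ∑ i, CMIrv μ (CS i) YM
          (fun ω => ((fun j : {j // i < j} => C j ω), (fun j : {j // i < j} => S j ω))) :=
        sum_le_sum fun i _ => (hindep i).MIrv_comp_le_CMIrv hμ0 YM
          fun p => (p.1.2, (fun j : {j // j ≤ i} => p.1.1 j), p.2.2)
    _ = ∑ i, CMIrv μ (CS i) YM (fun ω (j : {j // i < j}) => CS j ω) :=
        sum_congr rfl fun i _ => CMIrv_congr_right hμ0 _ _ fun ω ω' => by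
          simp [hCS, funext_iff, forall_and]
    _ = MIrv μ (fun ω i => CS i ω) YM := (MIrv_pi_eq_sum_CMIrv hμ0 hμ1 CS YM).symm
    _ = MIrv μ (fun ω => ((fun i => C i ω), (fun i => S i ω))) YM :=
        MIrv_congr_left hμ0 (fun ω ω' => by simp [hCS, funext_iff, forall_and]) YM

/-- **Single-letterization of the leakage term.** If for each `i` the pair `(C_i, S_i)` is
independent of `(C_{i+1}^n, S_{i+1}^n)`, then
`I(C^n, S^n ; Y^n, M) ≥ Σ_{i=1}^n I(C_i, S_i ; M, Y^i, S_{i+1}^n)`. -/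
theorem leakage_single_letterization
    {Ω α β γ η : Type} [Fintype Ω] [Fintype α] [Fintype β] [Fintype γ] [Fintype η]
    [DecidableEq α] [DecidableEq β] [DecidableEq γ] [DecidableEq η]
    (μ : Ω → ℝ) (hμ0 : ∀ ω, 0 ≤ μ ω) (hμ1 : ∑ ω, μ ω = 1)
    (n : ℕ) (M : Ω → α) (C : Fin n → Ω → β) (S : Fin n → Ω → γ) (Y : Fin n → Ω → η)
    (hindep : ∀ i : Fin n, IndepRV μ (fun ω => (C i ω, S i ω))
      (fun ω => ((fun j : {j : Fin n // i < j} => C j ω),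
        (fun j : {j : Fin n // i < j} => S j ω)))) :
    ∑ i : Fin n,
        MIrv μ (fun ω => (C i ω, S i ω))
          (fun ω => (M ω, (fun j : {j : Fin n // j ≤ i} => Y j ω),
            (fun j : {j : Fin n // i < j} => S j ω)))
      ≤ MIrv μ (fun ω => ((fun i : Fin n => C i ω), (fun i : Fin n => S i ω)))
          (fun ω => ((fun i : Fin n => Y i ω), M ω)) :=
  leakage_single_letterization_general hμ0 hμ1 M C S Y hindep
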